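/- Let q be a prime power and let δ ∈ (0, 1 − 1/q²) be a constant. Then there exist constants c > 0 and c' > 0 such that for all sufficiently large n the following holds with d − 1 = ⌊δn⌋ and ℓ = ⌊√n⌋: the number of ℓ-tuples (u_1, …, u_ℓ) ∈ B_q^S(2n, d−1)^ℓ for which the two-sided estimate ((1 − q^{−cn})/q^ℓ) · Vol_q^S(2n, d−1) ≤ |B_q^S(2n, d−1) ∩ {v : ⟨u_1,v⟩_S = 0} ∩ ⋯ ∩ {v : ⟨u_ℓ,v⟩_S = 0}| ≤ ((1 + q^{−cn})/q^ℓ) · Vol_q^S(2n, d−1) fails is at most q^{−c'n} · Vol_q^S(2n, d−1)^ℓ. -/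

import Mathlib

open Finset
open scoped Classical

/-- Symplectic weight of a vector in `F^{2n}`, written as `Fin n → F × F`. -/
noncomputable def sympWt {F : Type} [Zero F] [DecidableEq F] {n : ℕ} (u : Fin n → F × F) : ℕ :=
  hammingNorm u

/-- The symplectic inner product on `F^{2n}`: `⟨(a|b),(a'|b')⟩_S = ⟨a,b'⟩ - ⟨b,a'⟩`. -/
def sympInner {F : Type} [Field F] {n : ℕ} (u v : Fin n → F × F) : F :=
  ∑ i, ((u i).1 * (v i).2 - (u i).2 * (v i).1)

/-- The symplectic ball `B_q^S(2n, r)` of radius `r`. -/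
noncomputable def sympBall (F : Type) [Fintype F] [Zero F] [DecidableEq F] (n r : ℕ) :
    Finset (Fin n → F × F) :=
  Finset.univ.filter fun x => sympWt x ≤ r

/-- `Vol_q^S(2n, r) = ∑_{i=0}^{r} C(n,i)(q²-1)^i`, the volume of the symplectic ball. -/
def volS (q n r : ℕ) : ℕ :=
  ∑ i ∈ Finset.range (r + 1), n.choose i * (q ^ 2 - 1) ^ i

section helpers
variable {F : Type} [Field F] [Fintype F] [DecidableEq F]

/-- Binomial mode. -/
theorem mode_aux (n r : ℕ) (hr : r ≤ n) (i : ℕ) (hi : i ≤ n) :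
    n.choose i * r ^ i * (n - r) ^ (n - i) ≤ n.choose r * r ^ r * (n - r) ^ (n - r) := by
  obtain ⟨s, rfl⟩ := Nat.exists_eq_add_of_le hr
  have hs : r + s - r = s := by omega
  rw [hs]
  have step : ∀ j, j < r + s →
      ((r + s).choose (j+1) * r ^ (j+1) * s ^ (r + s - (j+1))) * ((j+1) * s) =
      ((r + s).choose j * r ^ j * s ^ (r + s - j)) * ((r + s - j) * r) := by
    intro j hj
    have h1 := Nat.choose_succ_right_eq (r+s) j
    have h2 : r + s - j = (r + s - (j+1)) + 1 := by omega
    calc _ = ((r + s).choose (j+1) * (j+1)) * r ^ (j+1) * (s ^ (r + s - (j+1)) * s) := by ring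
      _ = ((r + s).choose j * (r + s - j)) * r ^ (j+1) * (s ^ (r + s - j)) := by
        rw [h1, ← pow_succ, ← h2]
      _ = _ := by ring
  rcases Nat.eq_zero_or_pos s with hs0 | hs0
  · subst hs0
    simp only [add_zero] at *
    rcases hi.lt_or_eq with h | h
    · have : r - i ≠ 0 := by omega
      simp [this]
    · subst h; simp
  rcases Nat.eq_zero_or_pos r with hr0 | hr0
  · subst hr0
    rcases Nat.eq_zero_or_pos i with h | h
    · subst h; simp
    · simp [h.ne']
  rcases le_total i r with h | h
  · refine Nat.decreasingInduction' (n := r) (m := i)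
      (P := fun k => (r + s).choose k * r ^ k * s ^ (r + s - k) ≤ (r + s).choose r * r ^ r * s ^ s) ?_ h ?_
    · intro k hk _ ih
      refine le_trans ?_ ih
      have := step k (by omega)
      have h3 : (k+1) * s ≤ (r + s - k) * r := by
        zify [show k ≤ r + s by omega]
        have : (k:ℤ) + 1 ≤ r := by omega
        nlinarith
      refine Nat.le_of_mul_le_mul_right (c := (k+1)*s) ?_ (by positivity)
      rw [this]
      gcongr
    · rw [hs]
  · induction i, h using Nat.le_induction with
    | base => rw [hs]
    | succ k hk ih =>
      refine le_trans ?_ (ih (by omega))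
      have := step k (by omega)
      have h3 : (r + s - k) * r ≤ (k+1) * s := by
        zify [show k ≤ r + s by omega]
        have : (r:ℤ) ≤ k := by omega
        nlinarith
      refine Nat.le_of_mul_le_mul_right (c := (k+1)*s) ?_ (by positivity)
      rw [this]
      gcongr

theorem mode_bound (n r : ℕ) (hr : r ≤ n) :
    n ^ n ≤ (n + 1) * (n.choose r * r ^ r * (n - r) ^ (n - r)) := by
  have h := add_pow r (n - r) n
  rw [Nat.add_sub_cancel' hr] at h
  calc n ^ n = _ := h
    _ ≤ ∑ m ∈ range (n+1), n.choose r * r ^ r * (n - r) ^ (n - r) := by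
      refine Finset.sum_le_sum fun i hi => ?_
      rw [Finset.mem_range] at hi
      have := mode_aux n r hr i (by omega)
      calc _ = n.choose i * r ^ i * (n - r) ^ (n - i) := by simp only [Nat.cast_id]; ring
        _ ≤ _ := this
    _ = _ := by simp

theorem ball_sum {R : Type} [CommSemiring R] (n r : ℕ) (h : Fin n → F × F → R)
    (h0 : ∀ i, h i 0 = 1) :
    ∑ v ∈ sympBall F n r, ∏ i, h i (v i) =
      ∑ S ∈ (univ : Finset (Finset (Fin n))).filter (fun S => S.card ≤ r),
        ∏ i ∈ S, ∑ a ∈ univ.erase (0 : F × F), h i a := by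
  have key : ∀ S : Finset (Fin n), ∑ v ∈ (univ : Finset (Fin n → F × F)).filter
      (fun v => univ.filter (fun i => v i ≠ 0) = S), ∏ i, h i (v i) =
      ∏ i ∈ S, ∑ a ∈ univ.erase (0 : F × F), h i a := by
    intro S
    have e : (univ : Finset (Fin n → F × F)).filter
      (fun v => univ.filter (fun i => v i ≠ 0) = S) =
      Fintype.piFinset (fun i => if i ∈ S then univ.erase (0 : F × F) else {0}) := by
      ext v
      simp only [mem_filter, mem_univ, true_and, Fintype.mem_piFinset, Finset.ext_iff]
      refine forall_congr' fun i => ?_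
      by_cases hi : i ∈ S <;> simp [hi]
    rw [e, ← Finset.prod_univ_sum, ← Finset.prod_subset (Finset.subset_univ S)]
    · refine Finset.prod_congr rfl fun i hi => by simp [hi]
    · intro i _ hi
      simp [hi, h0]
  simp_rw [← key]
  rw [← Finset.sum_fiberwise_of_maps_to (s := sympBall F n r)
    (t := (univ : Finset (Finset (Fin n))).filter (fun S => S.card ≤ r))
    (g := fun v => univ.filter (fun i => v i ≠ 0))]
  · refine Finset.sum_congr rfl fun S hS => Finset.sum_congr ?_ fun _ _ => rfl
    ext v
    simp only [sympBall, mem_filter, mem_univ, true_and, sympWt, hammingNorm] at hS ⊢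
    constructor
    · exact fun h => h.2
    · intro h
      refine ⟨?_, h⟩
      rw [← h] at hS
      convert hS
  · intro v hv
    simp only [sympBall, mem_filter, mem_univ, true_and, sympWt, hammingNorm] at hv ⊢
    convert hv

theorem card_erase0 : (univ.erase (0 : F × F)).card = Fintype.card F ^ 2 - 1 := by
  rw [Finset.card_erase_of_mem (mem_univ _), Finset.card_univ, Fintype.card_prod, sq]

theorem card_ball (n r : ℕ) : (sympBall F n r).card = volS (Fintype.card F) n r := by
  have h := ball_sum (F := F) n r (fun _ _ => (1 : ℕ)) (fun _ => rfl)
  simp only [prod_const_one, sum_const, smul_eq_mul, mul_one, prod_const, card_erase0] at h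
  rw [h, volS, ← Finset.sum_fiberwise_of_maps_to (t := range (r+1)) (g := Finset.card)]
  · refine Finset.sum_congr rfl fun i hi => ?_
    rw [Finset.mem_range] at hi
    have : (univ.filter (fun S : Finset (Fin n) => S.card ≤ r)).filter (fun S => S.card = i)
       = Finset.powersetCard i univ := by
      ext S
      simp only [mem_filter, mem_univ, true_and, mem_powersetCard, subset_univ]
      omega
    rw [Finset.sum_congr rfl (g := fun _ => (Fintype.card F ^ 2 - 1)^i), this]
    · simp
    · intro S hS
      rw [(mem_filter.1 hS).2]
  · intro S hS
    simp only [mem_filter, mem_univ, true_and, mem_range] at *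
    omega

theorem sum_update {ι α : Type} [Fintype ι] [DecidableEq ι] (B : Finset α) (j : ι)
    (f : (ι → α) → ℝ) (M : ℝ)
    (h : ∀ u, ∑ b ∈ B, f (Function.update u j b) ≤ B.card * M) (hB : 0 < B.card) :
    ∑ u ∈ Fintype.piFinset (fun _ : ι => B), f u ≤ (B.card : ℝ) ^ Fintype.card ι * M := by
  have e : ∑ u ∈ Fintype.piFinset (fun _ : ι => B), ∑ b ∈ B, f (Function.update u j b)
      = ∑ u ∈ Fintype.piFinset (fun _ : ι => B), ∑ b ∈ B, f u := by
    rw [← Finset.sum_product', ← Finset.sum_product']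
    refine Finset.sum_nbij' (fun p => (Function.update p.1 j p.2, p.1 j))
      (fun p => (Function.update p.1 j p.2, p.1 j)) ?_ ?_ ?_ ?_ ?_
    · rintro ⟨u, b⟩ hp
      simp only [mem_product, Fintype.mem_piFinset] at hp ⊢
      refine ⟨fun i => ?_, hp.1 j⟩
      by_cases hi : i = j
      · subst hi; simpa using hp.2
      · simpa [hi] using hp.1 i
    · rintro ⟨u, b⟩ hp
      simp only [mem_product, Fintype.mem_piFinset] at hp ⊢
      refine ⟨fun i => ?_, hp.1 j⟩
      by_cases hi : i = j
      · subst hi; simpa using hp.2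
      · simpa [hi] using hp.1 i
    · rintro ⟨u, b⟩ _; simp
    · rintro ⟨u, b⟩ _; simp
    · rintro ⟨u, b⟩ _; simp
  have h2 : ∑ u ∈ Fintype.piFinset (fun _ : ι => B), ∑ b ∈ B, f (Function.update u j b) ≤
      ∑ u ∈ Fintype.piFinset (fun _ : ι => B), B.card * M := Finset.sum_le_sum fun u _ => h u
  rw [e] at h2
  simp only [sum_const, nsmul_eq_mul, Fintype.card_piFinset, prod_const, Finset.card_univ] at h2
  rw [← Finset.mul_sum] at h2
  have hB' : (0:ℝ) < B.card := by exact_mod_cast hB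
  refine le_of_mul_le_mul_left (h2.trans_eq ?_) hB'
  push_cast; ring
end helpers
section helpers2
variable {F : Type} [Field F] [Fintype F] [DecidableEq F]

theorem char_sum {ι : Type} (s : Finset ι) (ψ : AddChar F ℂ) (f : ι → F) :
    ψ (∑ i ∈ s, f i) = ∏ i ∈ s, ψ (f i) := by
  induction s using Finset.cons_induction with
  | empty => simp
  | cons a s ha ih => rw [Finset.sum_cons, Finset.prod_cons, AddChar.map_add_eq_mul, ih]

theorem sum_char_pair (ψ : AddChar F ℂ) (hψ : ψ.IsPrimitive) (x : F × F) :
    ∑ a ∈ univ.erase (0 : F × F), ψ (x.1 * a.2 - x.2 * a.1) =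
      if x = 0 then ((Fintype.card F : ℂ) ^ 2 - 1) else -1 := by
  have h1 : ∑ a : F × F, ψ (x.1 * a.2 - x.2 * a.1) =
      if x = 0 then ((Fintype.card F : ℂ) ^ 2) else 0 := by
    have e : ∀ a : F × F, ψ (x.1 * a.2 - x.2 * a.1) = ψ (a.1 * (-x.2)) * ψ (a.2 * x.1) := by
      intro a
      rw [← AddChar.map_add_eq_mul]
      congr 1
      ring
    simp_rw [e]
    rw [Fintype.sum_prod_type]
    simp_rw [← Finset.mul_sum]
    rw [← Finset.sum_mul, AddChar.sum_mulShift _ hψ, AddChar.sum_mulShift _ hψ]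
    rcases x with ⟨x1, x2⟩
    by_cases h1 : x1 = 0 <;> by_cases h2 : x2 = 0 <;> simp [h1, h2, sq]
  have h2 := Finset.add_sum_erase univ (fun a : F × F => ψ (x.1 * a.2 - x.2 * a.1))
    (mem_univ (0 : F × F))
  rw [h1] at h2
  simp only [Prod.fst_zero, Prod.snd_zero, mul_zero, sub_zero, AddChar.map_zero_eq_one] at h2
  split_ifs at h2 ⊢
  · rw [← h2]; ring
  · linear_combination h2

theorem hat_bound (ψ : AddChar F ℂ) (hψ : ψ.IsPrimitive) (n r : ℕ) (x : Fin n → F × F) (t : ℝ)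
    (ht0 : 0 < t) (ht1 : t ≤ 1) :
    ‖∑ v ∈ sympBall F n r, ψ (sympInner x v)‖ ≤
      (t ^ r)⁻¹ * ∏ i, (1 + t * (if x i = 0 then (Fintype.card F : ℝ) ^ 2 - 1 else 1)) := by
  have hq : (1:ℝ) ≤ (Fintype.card F : ℝ) ^ 2 :=
    one_le_pow₀ (by exact_mod_cast Fintype.card_pos)
  have e : ∀ v : Fin n → F × F, ψ (sympInner x v) =
      ∏ i, ψ ((x i).1 * (v i).2 - (x i).2 * (v i).1) := by
    intro v
    rw [sympInner, char_sum]
  simp_rw [e]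
  rw [ball_sum n r (fun i a => ψ ((x i).1 * a.2 - (x i).2 * a.1)) (by simp)]
  simp_rw [sum_char_pair ψ hψ]
  have g0 : ∀ i, 0 ≤ (if x i = 0 then (Fintype.card F : ℝ) ^ 2 - 1 else 1) := by
    intro i; split_ifs <;> linarith
  calc _ ≤ ∑ S ∈ (univ : Finset (Finset (Fin n))).filter (fun S => S.card ≤ r),
        ∏ i ∈ S, (if x i = 0 then (Fintype.card F : ℝ) ^ 2 - 1 else 1) := by
        refine (norm_sum_le _ _).trans (Finset.sum_le_sum fun S _ => ?_)
        rw [norm_prod]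
        refine (Finset.prod_congr rfl fun i _ => ?_).le
        split_ifs
        · have : ((Fintype.card F : ℂ) ^ 2 - 1) = (((Fintype.card F : ℝ) ^ 2 - 1 : ℝ) : ℂ) := by
            push_cast; rfl
          rw [this, Complex.norm_real, Real.norm_of_nonneg (by linarith)]
        · simp
    _ ≤ ∑ S ∈ (univ : Finset (Finset (Fin n))).filter (fun S => S.card ≤ r),
        (t ^ r)⁻¹ * ∏ i ∈ S, (t * (if x i = 0 then (Fintype.card F : ℝ) ^ 2 - 1 else 1)) := by
        refine Finset.sum_le_sum fun S hS => ?_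
        rw [Finset.prod_mul_distrib, Finset.prod_const, ← mul_assoc]
        refine le_mul_of_one_le_left (Finset.prod_nonneg fun i _ => g0 i) ?_
        rw [← div_eq_inv_mul, one_le_div (by positivity)]
        exact pow_le_pow_of_le_one ht0.le ht1 (mem_filter.1 hS).2
    _ ≤ ∑ S : Finset (Fin n),
        (t ^ r)⁻¹ * ∏ i ∈ S, (t * (if x i = 0 then (Fintype.card F : ℝ) ^ 2 - 1 else 1)) := by
        refine Finset.sum_le_sum_of_subset_of_nonneg (Finset.filter_subset _ _) fun S _ _ => ?_
        have := Finset.prod_nonneg (s := S) fun i _ => mul_nonneg ht0.le (g0 i)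
        positivity
    _ = _ := by
        rw [← Finset.mul_sum, Finset.prod_one_add, Finset.powerset_univ]

theorem ball_weight (n r : ℕ) (y : F) (hy : y ≠ 0) (z : Fin n → F × F) (t ρ : ℝ)
    (ht0 : 0 < t) (ht1 : t ≤ 1) (hρ0 : 0 ≤ ρ) (hρ1 : ρ ≤ 1) :
    ∑ b ∈ sympBall F n r, ∏ i, (if z i + y • b i = 0 then (1:ℝ) else ρ) ≤
      (t ^ r)⁻¹ * (1 + ((Fintype.card F : ℝ) ^ 2 - 1) * t * ρ) ^ n := by
  have w0 : ∀ (b : Fin n → F × F) i, 0 ≤ (if z i + y • b i = 0 then (1:ℝ) else ρ) := by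
    intro b i; split_ifs <;> linarith
  have w1 : ∀ (b : Fin n → F × F) i, 0 ≤ (if b i = 0 then (1:ℝ) else t) := by
    intro b i; split_ifs <;> linarith
  calc _ ≤ ∑ b ∈ sympBall F n r, (t ^ r)⁻¹ * ∏ i, ((if b i = 0 then (1:ℝ) else t) *
        (if z i + y • b i = 0 then (1:ℝ) else ρ)) := by
        refine Finset.sum_le_sum fun b hb => ?_
        rw [Finset.prod_mul_distrib, ← mul_assoc]
        refine le_mul_of_one_le_left (Finset.prod_nonneg fun i _ => w0 b i) ?_
        rw [← div_eq_inv_mul, one_le_div (by positivity)]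
        have : ∏ i, (if b i = 0 then (1:ℝ) else t) = t ^ (sympWt b) := by
          rw [Finset.prod_ite, Finset.prod_const_one, one_mul, Finset.prod_const, sympWt,
            hammingNorm]
        rw [this]
        exact pow_le_pow_of_le_one ht0.le ht1 (mem_filter.1 hb).2
    _ ≤ ∑ b : Fin n → F × F, (t ^ r)⁻¹ * ∏ i, ((if b i = 0 then (1:ℝ) else t) *
        (if z i + y • b i = 0 then (1:ℝ) else ρ)) := by
        refine Finset.sum_le_sum_of_subset_of_nonneg (Finset.subset_univ _) fun b _ _ => ?_
        have := Finset.prod_nonneg (s := univ) fun i _ => mul_nonneg (w1 b i) (w0 b i)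
        positivity
    _ = (t ^ r)⁻¹ * ∏ i, ∑ a : F × F, ((if a = 0 then (1:ℝ) else t) *
        (if z i + y • a = 0 then (1:ℝ) else ρ)) := by
        rw [← Finset.mul_sum, Finset.prod_univ_sum, Fintype.piFinset_univ]
    _ ≤ (t ^ r)⁻¹ * ∏ i : Fin n, (1 + ((Fintype.card F : ℝ) ^ 2 - 1) * t * ρ) := by
        refine mul_le_mul_of_nonneg_left (Finset.prod_le_prod ?_ ?_) (by positivity)
        · intro i _
          refine Finset.sum_nonneg fun a _ => mul_nonneg ?_ ?_ <;> split_ifs <;> linarith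
        · intro i _
          set a0 : F × F := -(y⁻¹ • z i) with ha0
          have e : ∀ a : F × F, z i + y • a = 0 ↔ a = a0 := by
            intro a
            rw [ha0]
            constructor
            · intro h
              rw [eq_neg_iff_add_eq_zero, ← smul_right_injective (F × F) hy |>.eq_iff]
              simp only [smul_add, smul_smul, mul_inv_cancel₀ hy, one_smul, smul_zero]
              rw [add_comm]; exact h
            · rintro rfl
              simp [smul_smul, mul_inv_cancel₀ hy]
          simp_rw [e]
          have e2 : ∀ a : F × F, ((if a = 0 then (1:ℝ) else t) * (if a = a0 then (1:ℝ) else ρ))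
              = t * ρ + (if a = 0 then (1 - t) * ρ else 0) + (if a = a0 then t * (1 - ρ) else 0)
                + (if a = a0 then (if a0 = 0 then (1 - t) * (1 - ρ) else 0) else 0) := by
            intro a
            by_cases h1 : a = a0
            · rw [h1]
              by_cases h2 : a0 = 0 <;> simp [h2] <;> ring
            · by_cases h2 : a = 0
              · simp [h1, h2, ]
                rw [if_neg (by rw [← h2]; exact h1)]
                rw [if_neg (by rw [← h2]; exact h1)]
                rw [if_neg (by rw [← h2]; exact h1)]
                ring
              · simp [h1, h2]
          simp_rw [e2]
          rw [Finset.sum_add_distrib, Finset.sum_add_distrib, Finset.sum_add_distrib]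
          simp only [sum_const, Finset.card_univ, Fintype.card_prod, Finset.sum_ite_eq', mem_univ,
            if_true, nsmul_eq_mul]
          have : (if a0 = 0 then (1 - t) * (1 - ρ) else 0) ≤ (1 - t) * (1 - ρ) := by
            split_ifs
            · rfl
            · exact mul_nonneg (by linarith) (by linarith)
          push_cast
          nlinarith
    _ = _ := by simp

theorem count_formula (ψ : AddChar F ℂ) (hψ : ψ.IsPrimitive) (n r l : ℕ)
    (u : Fin l → Fin n → F × F) :
    ((Fintype.card F : ℂ) ^ l) *
      (((sympBall F n r).filter fun v => ∀ i, sympInner (u i) v = 0).card : ℂ) =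
    ∑ y : Fin l → F, ∑ v ∈ sympBall F n r, ψ (sympInner (∑ i, y i • u i) v) := by
  rw [Finset.sum_comm, Finset.card_filter, Nat.cast_sum, Finset.mul_sum]
  refine Finset.sum_congr rfl fun v _ => ?_
  have e : ∀ y : Fin l → F, ψ (sympInner (∑ i, y i • u i) v) =
      ∏ i, ψ (y i * sympInner (u i) v) := by
    intro y
    rw [← char_sum]
    congr 1
    simp only [sympInner, Finset.mul_sum]
    rw [Finset.sum_comm]
    refine Finset.sum_congr rfl fun j _ => ?_
    simp only [Finset.sum_apply, Pi.smul_apply, Prod.fst_sum, Prod.snd_sum, Prod.smul_fst,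
      Prod.smul_snd, smul_eq_mul, Finset.sum_mul, ← Finset.sum_sub_distrib]
    refine Finset.sum_congr rfl fun i _ => ?_
    ring
  simp_rw [e]
  have := Finset.prod_univ_sum (fun _ : Fin l => (univ : Finset F))
    (fun i a => ψ (a * sympInner (u i) v))
  rw [Fintype.piFinset_univ] at this
  rw [← this]
  simp_rw [AddChar.sum_mulShift _ hψ]
  by_cases h : ∀ i, sympInner (u i) v = 0
  · simp [h]
  · rw [if_neg h]
    push Not at h
    obtain ⟨i, hi⟩ := h
    rw [Finset.prod_eq_zero (mem_univ i) (by simp [hi])]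
    simp

theorem count_dev (ψ : AddChar F ℂ) (hψ : ψ.IsPrimitive) (n r l : ℕ)
    (u : Fin l → Fin n → F × F) :
    |((Fintype.card F : ℝ) ^ l) *
      (((sympBall F n r).filter fun v => ∀ i, sympInner (u i) v = 0).card : ℝ)
        - (sympBall F n r).card| ≤
    ∑ y ∈ univ.erase (0 : Fin l → F),
      ‖∑ v ∈ sympBall F n r, ψ (sympInner (∑ i, y i • u i) v)‖ := by
  have h := count_formula ψ hψ n r l u
  rw [← Finset.add_sum_erase univ _ (mem_univ (0 : Fin l → F))] at h
  have h0 : ∑ v ∈ sympBall F n r, ψ (sympInner (∑ i, (0 : Fin l → F) i • u i) v) =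
      ((sympBall F n r).card : ℂ) := by
    simp [sympInner]
  rw [h0] at h
  rw [← Real.norm_eq_abs, ← Complex.norm_real]
  push_cast
  rw [h, add_sub_cancel_left]
  exact norm_sum_le _ _

theorem vol_lower (n r Q : ℕ) (hr0 : 0 < r) (hr : r < n) (t : ℝ) (hQ : 2 ≤ Q)
    (ht : t = (r : ℝ) / (((Q ^ 2 - 1 : ℕ) : ℝ) * ((n : ℝ) - r))) :
    (t ^ r)⁻¹ * (1 + ((Q : ℝ) ^ 2 - 1) * t) ^ n ≤ (n + 1) * (volS Q n r : ℝ) := by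
  have h := mode_bound n r hr.le
  have hQ1 : 0 < Q ^ 2 - 1 := by
    have : 2 ^ 2 ≤ Q ^ 2 := Nat.pow_le_pow_left hQ 2
    omega
  have hQc : ((Q ^ 2 - 1 : ℕ) : ℝ) = (Q:ℝ)^2 - 1 := by
    rw [Nat.cast_sub (by omega)]; push_cast; rfl
  have hQ1' : (0:ℝ) < (Q ^ 2 - 1 : ℕ) := by exact_mod_cast hQ1
  have hv : n.choose r * (Q ^ 2 - 1) ^ r ≤ volS Q n r := by
    rw [volS]
    exact Finset.single_le_sum (f := fun i => n.choose i * (Q ^ 2 - 1) ^ i)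
      (fun i _ => Nat.zero_le _) (by simp)
  have hv' : (n.choose r : ℝ) * ((Q ^ 2 - 1 : ℕ) : ℝ) ^ r ≤ volS Q n r := by exact_mod_cast hv
  have h' : (n : ℝ) ^ n ≤ (n + 1) * (n.choose r * (r : ℝ) ^ r * ((n : ℝ) - r) ^ (n - r)) := by
    have : ((n ^ n : ℕ) : ℝ) ≤ (((n + 1) * (n.choose r * r ^ r * (n - r) ^ (n - r)) : ℕ) : ℝ) := by
      exact_mod_cast h
    push_cast [Nat.cast_sub hr.le] at this
    exact this
  refine le_trans ?_ (mul_le_mul_of_nonneg_left hv' (by positivity))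
  rw [← hQc]
  set P : ℝ := ((Q ^ 2 - 1 : ℕ) : ℝ)
  have hr' : (0:ℝ) < r := by exact_mod_cast hr0
  have hnr : (0:ℝ) < (n:ℝ) - r := by
    have : (r:ℝ) < n := by exact_mod_cast hr
    linarith
  have hD : 1 + P * t = n / ((n:ℝ) - r) := by
    rw [ht]; field_simp; ring
  have hs : ((n:ℝ) - r) ^ n = ((n:ℝ) - r) ^ (n - r) * ((n:ℝ) - r) ^ r := by
    rw [← pow_add]; congr 1; omega
  rw [hD, div_pow, ht, div_pow, mul_pow, hs]
  rw [inv_div]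
  rw [div_mul_div_comm, div_le_iff₀ (by positivity)]
  calc _ = (P ^ r * ((n:ℝ) - r) ^ r) * (n:ℝ) ^ n := by ring
    _ ≤ (P ^ r * ((n:ℝ) - r) ^ r) * _ := mul_le_mul_of_nonneg_left h' (by positivity)
    _ = _ := by ring
end helpers2
section helpers3
variable {F : Type} [Field F] [Fintype F] [DecidableEq F]

theorem hat_sum_bound (ψ : AddChar F ℂ) (hψ : ψ.IsPrimitive) (n r : ℕ)
    (hr0 : 0 < r) (hr : r < n)
    (ht : (r : ℝ) ≤ ((Fintype.card F : ℝ) ^ 2 - 1) * ((n : ℝ) - r))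
    (y : F) (hy : y ≠ 0) (z : Fin n → F × F) (κ : ℝ) (hκ : 1 - ((r : ℝ) / n) ^ 2 / 2 ≤ κ) :
    ∑ b ∈ sympBall F n r, ‖∑ v ∈ sympBall F n r, ψ (sympInner (z + y • b) v)‖ ≤
      ((n + 1) * (volS (Fintype.card F) n r : ℝ)) ^ 2 * κ ^ n := by
  have hq : 2 ≤ Fintype.card F := Fintype.one_lt_card
  have hq4 : (4:ℝ) ≤ (Fintype.card F : ℝ) ^ 2 := by
    have : (2:ℝ) ≤ Fintype.card F := by exact_mod_cast hq
    nlinarith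
  have hc : ((Fintype.card F ^ 2 - 1 : ℕ) : ℝ) = (Fintype.card F : ℝ) ^ 2 - 1 := by
    rw [Nat.cast_sub (Nat.one_le_pow _ _ (by omega))]; push_cast; rfl
  obtain ⟨t, htd⟩ : ∃ t : ℝ, t = (r : ℝ) / (((Fintype.card F ^ 2 - 1 : ℕ) : ℝ) * ((n : ℝ) - r)) :=
    ⟨_, rfl⟩
  have hA := vol_lower n r (Fintype.card F) hr0 hr t hq htd
  rw [hc] at htd
  set P : ℝ := (Fintype.card F : ℝ) ^ 2 - 1
  have hP : 3 ≤ P := by linarith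
  have hr' : (0:ℝ) < r := by exact_mod_cast hr0
  have hnr : (0:ℝ) < (n:ℝ) - r := by
    have : (r:ℝ) < n := by exact_mod_cast hr
    linarith
  have hn' : (0:ℝ) < n := by linarith
  have hD0 : 0 < P * ((n:ℝ) - r) := by positivity
  have ht0 : 0 < t := by rw [htd]; positivity
  have ht1 : t ≤ 1 := by rw [htd, div_le_one hD0]; exact ht
  set D : ℝ := 1 + P * t with hDdef
  have hDpos : 0 < D := by positivity
  set ρ : ℝ := (1 + t) / D with hρ
  have hρ0 : 0 ≤ ρ := by positivity
  have hρ1 : ρ ≤ 1 := by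
    rw [hρ, div_le_one hDpos, hDdef]; nlinarith
  set A : ℝ := (n + 1) * (volS (Fintype.card F) n r : ℝ)
  have hprod : ∀ x : Fin n → F × F,
      ∏ i, (1 + t * (if x i = 0 then P else 1)) = D ^ n * ∏ i, (if x i = 0 then (1:ℝ) else ρ) := by
    intro x
    have : D ^ n = ∏ i : Fin n, D := by simp
    rw [this, ← Finset.prod_mul_distrib]
    refine Finset.prod_congr rfl fun i _ => ?_
    split_ifs
    · rw [hDdef]; ring
    · rw [hρ]; field_simp
  have hT0 : 0 ≤ (t ^ r)⁻¹ * D ^ n := by positivity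
  have hA0 : 0 ≤ A := hT0.trans hA
  have hκ2 : (1 + P * t * ρ) ≤ D * κ := by
    have h1 : P * t = r / ((n:ℝ) - r) := by rw [htd]; field_simp
    have h2 : D = n / ((n:ℝ) - r) := by rw [hDdef, h1]; field_simp; ring
    have h3 : 1 + P * t * ρ = D * (1 - (r / n : ℝ) ^ 2 * ((P - 1) / P)) := by
      rw [hρ, htd, h2]; field_simp; ring
    rw [h3]
    refine mul_le_mul_of_nonneg_left (le_trans ?_ hκ) hDpos.le
    have : 1 / 2 ≤ (P - 1) / P := by
      rw [div_le_div_iff₀ (by norm_num) (by linarith)]; linarith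
    nlinarith [sq_nonneg (r / n : ℝ)]
  have hκ0 : 0 ≤ κ := by
    have : 0 ≤ D * κ := le_trans (by positivity) hκ2
    exact nonneg_of_mul_nonneg_right this hDpos
  calc _ ≤ ∑ b ∈ sympBall F n r, A * ∏ i, (if z i + y • b i = 0 then (1:ℝ) else ρ) := by
        refine Finset.sum_le_sum fun b _ => ?_
        refine (hat_bound ψ hψ n r (z + y • b) t ht0 ht1).trans ?_
        rw [hprod, ← mul_assoc]
        refine mul_le_mul hA (le_of_eq ?_) (Finset.prod_nonneg fun i _ => ?_) hA0
        · rfl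
        · split_ifs <;> linarith
    _ ≤ A * ((t ^ r)⁻¹ * (1 + P * t * ρ) ^ n) := by
        rw [← Finset.mul_sum]
        exact mul_le_mul_of_nonneg_left (ball_weight n r y hy z t ρ ht0 ht1 hρ0 hρ1) hA0
    _ ≤ A * ((t ^ r)⁻¹ * (D * κ) ^ n) := by gcongr
    _ = A * (((t ^ r)⁻¹ * D ^ n) * κ ^ n) := by rw [mul_pow]; ring
    _ ≤ A * (A * κ ^ n) := by gcongr
    _ = _ := by ring

theorem vol_pos (q n r : ℕ) : 0 < volS q n r := by
  rw [volS]
  have := Finset.single_le_sum (f := fun i => n.choose i * (q ^ 2 - 1) ^ i)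
      (fun i _ => Nat.zero_le _) (show 0 ∈ Finset.range (r+1) by simp)
  simp at this
  omega

theorem core_bound (n r l : ℕ) (hr0 : 0 < r) (hr : r < n)
    (ht : (r : ℝ) ≤ ((Fintype.card F : ℝ) ^ 2 - 1) * ((n : ℝ) - r))
    (κ : ℝ) (hκ : 1 - ((r : ℝ) / n) ^ 2 / 2 ≤ κ) (hκ0 : 0 ≤ κ) (ε : ℝ) (hε : 0 < ε) :
    (((Finset.univ : Finset (Fin l → Fin n → F × F)).filter fun u =>
          (∀ i, u i ∈ sympBall F n r) ∧
            ¬ ((1 - ε) / (Fintype.card F : ℝ) ^ l * (volS (Fintype.card F) n r : ℝ) ≤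
                (((sympBall F n r).filter fun v => ∀ i, sympInner (u i) v = 0).card : ℝ) ∧
                (((sympBall F n r).filter fun v => ∀ i, sympInner (u i) v = 0).card : ℝ) ≤
                (1 + ε) / (Fintype.card F : ℝ) ^ l * (volS (Fintype.card F) n r : ℝ))).card : ℝ) ≤
      (Fintype.card F : ℝ) ^ l * ((n + 1) ^ 2 * κ ^ n) / ε *
        (volS (Fintype.card F) n r : ℝ) ^ l := by
  set q := Fintype.card F with hqdef
  have hq0 : (0:ℝ) < q := by rw [hqdef]; exact_mod_cast Fintype.card_pos
  have hψ := AddChar.FiniteField.primitiveChar_to_Complex_isPrimitive F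
  set ψ := AddChar.FiniteField.primitiveChar_to_Complex F
  have hcard := card_ball (F := F) n r
  rw [← hqdef] at hcard
  set V := volS q n r with hV
  have hV0 : (0:ℝ) < V := by exact_mod_cast vol_pos q n r
  set T : (Fin l → Fin n → F × F) → ℝ := fun u => ∑ y ∈ univ.erase (0 : Fin l → F),
      ‖∑ v ∈ sympBall F n r, ψ (sympInner (∑ i, y i • u i) v)‖ with hT
  set K : ℝ := (n + 1) ^ 2 * V * κ ^ n with hK
  have hK0 : 0 ≤ K := by positivity
  have hTsum : ∑ u ∈ Fintype.piFinset (fun _ : Fin l => sympBall F n r), T u ≤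
      (q : ℝ) ^ l * ((V : ℝ) ^ l * K) := by
    rw [hT, Finset.sum_comm]
    have : ∀ y ∈ univ.erase (0 : Fin l → F),
        ∑ u ∈ Fintype.piFinset (fun _ : Fin l => sympBall F n r),
        ‖∑ v ∈ sympBall F n r, ψ (sympInner (∑ i, y i • u i) v)‖ ≤ (V : ℝ) ^ l * K := by
      intro y hy
      have hy' : y ≠ 0 := Finset.ne_of_mem_erase hy
      obtain ⟨j, hj⟩ := Function.ne_iff.1 hy'
      have h := sum_update (sympBall F n r) j
        (fun u => ‖∑ v ∈ sympBall F n r, ψ (sympInner (∑ i, y i • u i) v)‖) K ?_ ?_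
      · rw [hcard, Fintype.card_fin] at h
        exact h
      · intro u
        have e : ∀ b, ∑ i, y i • Function.update u j b i =
            (∑ i ∈ univ.erase j, y i • u i) + y j • b := by
          intro b
          rw [← Finset.sum_erase_add _ _ (mem_univ j)]
          congr 1
          · refine Finset.sum_congr rfl fun i hi => ?_
            rw [Function.update_of_ne (Finset.ne_of_mem_erase hi)]
          · simp
        simp_rw [e]
        refine (hat_sum_bound ψ hψ n r hr0 hr ht (y j) hj _ κ hκ).trans (le_of_eq ?_)
        rw [hcard, hK]
        ring
      · rw [hcard]; exact vol_pos q n r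
    refine (Finset.sum_le_card_nsmul _ _ _ this).trans ?_
    rw [nsmul_eq_mul]
    refine mul_le_mul_of_nonneg_right ?_ (by positivity)
    have h1 : (univ.erase (0 : Fin l → F)).card ≤ q ^ l := by
      refine (Finset.card_le_univ _).trans ?_
      simp [hqdef]
    exact_mod_cast h1
  set bad := _root_.id (((Finset.univ : Finset (Fin l → Fin n → F × F)).filter fun u =>
          (∀ i, u i ∈ sympBall F n r) ∧
            ¬ ((1 - ε) / (q : ℝ) ^ l * (V : ℝ) ≤
                (((sympBall F n r).filter fun v => ∀ i, sympInner (u i) v = 0).card : ℝ) ∧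
                (((sympBall F n r).filter fun v => ∀ i, sympInner (u i) v = 0).card : ℝ) ≤
                (1 + ε) / (q : ℝ) ^ l * (V : ℝ)))) with hbad
  change (bad.card : ℝ) ≤ _
  have hb : (bad.card : ℝ) * (ε * V) ≤ ∑ u ∈ bad, T u := by
    rw [← nsmul_eq_mul]
    refine Finset.card_nsmul_le_sum _ _ _ fun u hu => ?_
    rw [hbad, id, mem_filter] at hu
    by_contra hlt
    push Not at hlt
    refine hu.2.2 ?_
    have hd := (count_dev ψ hψ n r l u).trans hlt.le
    rw [hcard, abs_le, ← hqdef] at hd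
    constructor
    · rw [div_mul_eq_mul_div, div_le_iff₀ (by positivity)]
      nlinarith [hd.1]
    · rw [div_mul_eq_mul_div, le_div_iff₀ (by positivity)]
      nlinarith [hd.2]
  have hsub : ∑ u ∈ bad, T u ≤ ∑ u ∈ Fintype.piFinset (fun _ : Fin l => sympBall F n r), T u := by
    refine Finset.sum_le_sum_of_subset_of_nonneg ?_ fun u _ _ =>
      Finset.sum_nonneg fun y _ => norm_nonneg _
    intro u hu
    rw [hbad, id, mem_filter] at hu
    rw [Fintype.mem_piFinset]
    exact hu.2.1
  have hfin := hb.trans (hsub.trans hTsum)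
  rw [← le_div_iff₀ (by positivity)] at hfin
  refine hfin.trans (le_of_eq ?_)
  rw [hK]
  field_simp

theorem asymp (q : ℝ) (hq : 1 < q) (a : ℝ) (ha : 0 < a) :
    ∃ N : ℕ, ∀ n : ℕ, N ≤ n → q ^ (Nat.sqrt n) * ((n : ℝ) + 1) ^ 2 ≤ q ^ (a * (n : ℝ)) := by
  have hl : 0 < Real.log q := Real.log_pos hq
  -- sqrt n * log q + 2 log (n+1) ≤ a n log q
  have h1 : Filter.Tendsto (fun n : ℕ => Real.sqrt n) Filter.atTop Filter.atTop :=
    Real.tendsto_sqrt_atTop.comp tendsto_natCast_atTop_atTop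
  obtain ⟨N, hN⟩ := Filter.eventually_atTop.1
    (h1.eventually_ge_atTop ((Real.log q + 4) / (a * Real.log q)))
  refine ⟨N, fun n hn => ?_⟩
  have h2 := hN n hn
  rw [div_le_iff₀ (by positivity)] at h2
  set s := Real.sqrt n with hs
  have hs0 : 0 ≤ s := Real.sqrt_nonneg _
  have hss : s * s = n := Real.mul_self_sqrt (Nat.cast_nonneg n)
  have h3 : (Nat.sqrt n : ℝ) ≤ s := Real.nat_sqrt_le_real_sqrt
  have h4 : ((n : ℝ) + 1) ^ 2 ≤ Real.exp (4 * s) := by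
    have h5 : s + 1 ≤ Real.exp s := Real.add_one_le_exp s
    have h6 : ((n : ℝ) + 1) ≤ (s + 1) ^ 2 := by nlinarith
    calc ((n : ℝ) + 1) ^ 2 ≤ ((s + 1) ^ 2) ^ 2 := by gcongr
      _ ≤ ((Real.exp s) ^ 2) ^ 2 := by gcongr
      _ = Real.exp (4 * s) := by rw [← pow_mul, ← Real.exp_nat_mul]; norm_num
  calc q ^ (Nat.sqrt n) * ((n : ℝ) + 1) ^ 2 ≤ Real.exp (Real.log q * s) * Real.exp (4 * s) := by
        refine mul_le_mul ?_ h4 (by positivity) (by positivity)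
        rw [← Real.rpow_natCast, Real.rpow_def_of_pos (by linarith)]
        gcongr
    _ = Real.exp ((Real.log q + 4) * s) := by rw [← Real.exp_add]; ring_nf
    _ ≤ Real.exp (Real.log q * (a * n)) := by
        apply Real.exp_le_exp.2
        rw [← hss]
        nlinarith
    _ = _ := by rw [Real.rpow_def_of_pos (by linarith)]
end helpers3

/-- For a prime power `q` (realized as the cardinality of a finite field `F`)
and a constant `δ ∈ (0, 1 - 1/q²)`, there exist `c, c' > 0` such that for all sufficiently
large `n`, with `d - 1 = ⌊δn⌋` and `ℓ = ⌊√n⌋`: the number of `ℓ`-tuples of vectors of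
`B_q^S(2n, d-1)` for which the two-sided estimate
`((1 ∓ q^{-cn})/q^ℓ)·Vol_q^S(2n,d-1)` on `|B_q^S(2n,d-1) ∩ ⋂_i ⟨u_i⟩^{⊥_S}|` fails is at most
`q^{-c'n} · Vol_q^S(2n, d-1)^ℓ`. -/
theorem symp_l_vector_intersection_bound
    (q : ℕ) (F : Type) [Field F] [Fintype F] [DecidableEq F] (hF : Fintype.card F = q)
    (δ : ℝ) (hδ0 : 0 < δ) (hδ : δ < 1 - 1 / (q : ℝ) ^ 2) :
    ∃ c : ℝ, 0 < c ∧ ∃ c' : ℝ, 0 < c' ∧ ∃ N : ℕ, ∀ n : ℕ, N ≤ n →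
      (((Finset.univ : Finset (Fin (Nat.sqrt n) → Fin n → F × F)).filter fun u =>
          (∀ i, u i ∈ sympBall F n ⌊δ * (n : ℝ)⌋₊) ∧
            ¬ ((1 - (q : ℝ) ^ (-(c * (n : ℝ)))) / (q : ℝ) ^ (Nat.sqrt n) *
                  (volS q n ⌊δ * (n : ℝ)⌋₊ : ℝ) ≤
                (((sympBall F n ⌊δ * (n : ℝ)⌋₊).filter fun v =>
                    ∀ i, sympInner (u i) v = 0).card : ℝ) ∧
                (((sympBall F n ⌊δ * (n : ℝ)⌋₊).filter fun v =>
                    ∀ i, sympInner (u i) v = 0).card : ℝ) ≤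
                (1 + (q : ℝ) ^ (-(c * (n : ℝ)))) / (q : ℝ) ^ (Nat.sqrt n) *
                  (volS q n ⌊δ * (n : ℝ)⌋₊ : ℝ))).card : ℝ) ≤
        (q : ℝ) ^ (-(c' * (n : ℝ))) * (volS q n ⌊δ * (n : ℝ)⌋₊ : ℝ) ^ (Nat.sqrt n) := by
  subst hF
  have hq1 : (1:ℝ) < Fintype.card F := by exact_mod_cast (Fintype.one_lt_card (α := F))
  have hq4 : (4:ℝ) ≤ (Fintype.card F : ℝ) ^ 2 := by
    have : (2:ℝ) ≤ Fintype.card F := by exact_mod_cast (Fintype.one_lt_card (α := F))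
    nlinarith
  have hδ1 : δ < 1 := by
    have : 0 < 1 / (Fintype.card F : ℝ) ^ 2 := by positivity
    linarith
  set κ : ℝ := 1 - δ ^ 2 / 8 with hκ
  have hκ0 : 0 < κ := by rw [hκ]; nlinarith
  have hκ1 : κ < 1 := by rw [hκ]; nlinarith
  have hlq := Real.log_pos hq1
  set a : ℝ := -Real.log κ / Real.log (Fintype.card F) / 3 with ha
  have ha0 : 0 < a := by
    have := Real.log_neg hκ0 hκ1
    rw [ha]
    have : 0 < -Real.log κ := by linarith
    positivity
  have hκa : ∀ n : ℕ, κ ^ n = (Fintype.card F : ℝ) ^ (-(3 * a * n)) := by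
    intro n
    rw [← Real.rpow_natCast, Real.rpow_def_of_pos hκ0, Real.rpow_def_of_pos (by linarith)]
    congr 1
    rw [ha]
    field_simp
  obtain ⟨N, hN⟩ := asymp _ hq1 a ha0
  refine ⟨a, ha0, a, ha0, max N (⌈2 / δ⌉₊ + 1), fun n hn => ?_⟩
  have hnN : N ≤ n := (le_max_left _ _).trans hn
  have hn2 : ⌈2 / δ⌉₊ + 1 ≤ n := (le_max_right _ _).trans hn
  have hn3 : 2 / δ ≤ n := (Nat.le_ceil _).trans (by exact_mod_cast (by omega : ⌈2 / δ⌉₊ ≤ n))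
  rw [div_le_iff₀ hδ0] at hn3
  have hn0 : (0:ℝ) < n := by
    have : 0 < n := by omega
    exact_mod_cast this
  set r := ⌊δ * (n : ℝ)⌋₊ with hr
  have hr1 : (r : ℝ) ≤ δ * n := Nat.floor_le (by positivity)
  have hr2 : δ * n < r + 1 := Nat.lt_floor_add_one _
  have hrpos : 0 < r := by
    have : (0:ℝ) < r := by nlinarith
    exact_mod_cast this
  have hrn : r < n := by
    have : (r:ℝ) < n := by nlinarith
    exact_mod_cast this
  have hrt : (r : ℝ) ≤ ((Fintype.card F : ℝ) ^ 2 - 1) * ((n : ℝ) - r) := by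
    have h1 : δ * (Fintype.card F : ℝ) ^ 2 ≤ (Fintype.card F : ℝ) ^ 2 - 1 := by
      have := mul_le_mul_of_nonneg_right hδ.le (show (0:ℝ) ≤ (Fintype.card F : ℝ) ^ 2 by positivity)
      rw [sub_mul, one_mul, one_div, inv_mul_cancel₀ (by positivity)] at this
      exact this
    have h2 : (r : ℝ) * (Fintype.card F : ℝ) ^ 2 ≤ δ * n * (Fintype.card F : ℝ) ^ 2 := by gcongr
    nlinarith
  have hrκ : 1 - ((r : ℝ) / n) ^ 2 / 2 ≤ κ := by
    have : δ / 2 ≤ (r : ℝ) / n := by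
      rw [div_le_div_iff₀ (by norm_num) hn0]; nlinarith
    have : (δ / 2) ^ 2 ≤ ((r : ℝ) / n) ^ 2 := by gcongr
    rw [hκ]; nlinarith
  have hpos : (0:ℝ) < Fintype.card F := by linarith
  refine (core_bound (F := F) n r (Nat.sqrt n) hrpos hrn hrt κ hrκ hκ0.le
    ((Fintype.card F : ℝ) ^ (-(a * (n : ℝ)))) (by positivity)).trans ?_
  refine mul_le_mul_of_nonneg_right ?_ (by positivity)
  rw [div_le_iff₀ (by positivity), ← mul_assoc, hκa]
  refine (mul_le_mul_of_nonneg_right (hN n hnN) (by positivity)).trans (le_of_eq ?_)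
  rw [← Real.rpow_add hpos, ← Real.rpow_add hpos]
  congr 1
  ring
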